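/- arXiv:0812.0997 — 5 statements merged into one kernel-verified Lean document; each statement's English description precedes it below -/
import Mathlib

section
/- Pointwise span inclusion (key step of the orbit computation): Assume Φ is three times continuously differentiable. Let x = (q,p) ∈ ℝ^{2n} be a point at which φ′(q₁−q₂)·φ″(qₙ−q₁) + φ′(qₙ−q₁)·φ″(q₁−q₂) ≠ 0. Then the linear span of the four vectors f(x), g(x), (ad²f g)(x), and [ad²f g, ad f g](x) contains the linear span of f(x), e_{p₁}, and e_{pₙ}; in particular it contains the coordinate vectors e_{p₁}, e_{p₂} and e_{pₙ}. -/
/-!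
The force on the ring is a sum over bonds: the bond `k — k + 1` contributes `φ(q_k - q_{k+1})`
along `e_{p_{k+1}} - e_{p_k}`. Since `ad f g = -e_{q_j}`, where `j` is the controlled particle,
the vectors `ad² f g` and `[ad² f g, ad f g]` are the first and second derivatives of `f` along
`e_{q_j}`. Only the bonds `j` and `j - 1` feel this direction, the first being stretched and the
second shortened. With `u = e_{p_{j+1}} - e_{p_j}` and `w = e_{p_j} - e_{p_{j-1}}` the two vectors
are therefore `a u - b w` and `c u + d w`, where `a`, `c` are the values of `φ'`, `φ''` on bond
`j`, and `b`, `d` those on bond `j - 1`. The nonvanishing determinant `a d + b c` lets us solve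
for `u` and `w`, and adding multiples of `e_{p_j}` recovers `e_{p_{j+1}}` and `e_{p_{j-1}}`.
-/

open scoped BigOperators
open MeasureTheory Filter Set

noncomputable section

/-- The state space ℝ^{2n}, with coordinates (q,p). -/
abbrev State (n : ℕ) := (Fin n → ℝ) × (Fin n → ℝ)

/-- The drift vector field of the periodic multiparticle system,
`f(q,p) = Σ p_k ∂/∂q_k + Σ (φ(q_{k-1}-q_k) - φ(q_k-q_{k+1})) ∂/∂p_k` with `φ = Φ'`,
with cyclic indexing in `Fin n`. -/
def drift (n : ℕ) [NeZero n] (Φ : ℝ → ℝ) (x : State n) : State n :=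
  (x.2, fun k => deriv Φ (x.1 (k - 1) - x.1 k) - deriv Φ (x.1 k - x.1 (k + 1)))

/-- The momentum coordinate vector `e_{p_j} = ∂/∂p_j`. -/
def ep (n : ℕ) [NeZero n] (j : Fin n) : State n := (0, Pi.single j 1)

/-- The position coordinate vector `e_{q_j} = ∂/∂q_j`. -/
def eq' (n : ℕ) [NeZero n] (j : Fin n) : State n := (Pi.single j 1, 0)

/-- `Φ` is admissible: real analytic, bounded below, and `Φ(y) → +∞` as `y → +∞`. -/
def Admissible (Φ : ℝ → ℝ) : Prop :=
  (∀ x, AnalyticAt ℝ Φ x) ∧ BddBelow (Set.range Φ) ∧ Tendsto Φ atTop atTop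

/-- `Φ` is generic: for no `b` is `Φ''` even or odd about `b`. -/
def Generic (Φ : ℝ → ℝ) : Prop :=
  ∀ b : ℝ,
    (¬ ∀ t : ℝ, deriv (deriv Φ) (b + t) = deriv (deriv Φ) (b - t)) ∧
    (¬ ∀ t : ℝ, deriv (deriv Φ) (b + t) = - deriv (deriv Φ) (b - t))

/-- Lie bracket of vector fields: `[X,Y](x) = DY(x)·X(x) − DX(x)·Y(x)`. -/
def lieBracket {n : ℕ} (X Y : State n → State n) : State n → State n :=
  fun x => fderiv ℝ Y x (X x) - fderiv ℝ X x (Y x)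

/-- Admissible trajectory of the single forced system `ẋ = f(x) + u(t) g`
(in absolutely-continuous/integral form). -/
def IsTrajectory (n : ℕ) [NeZero n] (Φ : ℝ → ℝ) (θ : ℝ) (u : ℝ → ℝ)
    (x : ℝ → State n) : Prop :=
  ContinuousOn x (Set.Icc 0 θ) ∧
  ∀ t ∈ Set.Icc 0 θ,
    x t = x 0 + ∫ s in (0:ℝ)..t, (drift n Φ (x s) + u s • ep n 0)

lemma mem_and_mem_of_det_ne_zero {K V : Type*} [Field K] [AddCommGroup V] [Module K V]
    (S : Submodule K V) {a b c d : K} {u w : V} (h₁ : a • u + b • w ∈ S) (h₂ : c • u + d • w ∈ S)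
    (hdet : a * d - b * c ≠ 0) : u ∈ S ∧ w ∈ S := by
  have cramer_u : (a * d - b * c) • u = d • (a • u + b • w) - b • (c • u + d • w) := by module
  have cramer_w : (a * d - b * c) • w = a • (c • u + d • w) - c • (a • u + b • w) := by module
  constructor
  · rw [← S.smul_mem_iff hdet, cramer_u]
    exact S.sub_mem (S.smul_mem d h₁) (S.smul_mem b h₂)
  · rw [← S.smul_mem_iff hdet, cramer_w]
    exact S.sub_mem (S.smul_mem a h₂) (S.smul_mem c h₁)

lemma lieBracket_const_right {n : ℕ} (X : State n → State n) (v : State n) :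
    lieBracket X (fun _ => v) = fun x => -fderiv ℝ X x v := by
  funext x
  simp [lieBracket]

section Bonds

variable {n : ℕ} [NeZero n]

/-- The signed elongation `q_k - q_{k+1}` of the bond between particles `k` and `k + 1`, as a
continuous linear functional, so that the chain rule applies to it directly. -/
def bondGap (k : Fin n) : State n →L[ℝ] ℝ :=
  (.proj k - .proj (k + 1) : (Fin n → ℝ) →L[ℝ] ℝ) ∘L .fst ℝ (Fin n → ℝ) (Fin n → ℝ)

/-- The direction `e_{p_{k+1}} - e_{p_k}` in which the bond between particles `k` and `k + 1`
transfers momentum. -/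
def bondKick (k : Fin n) : State n := ep n (k + 1) - ep n k

lemma bondGap_apply (k : Fin n) (x : State n) : bondGap k x = x.1 k - x.1 (k + 1) := rfl

lemma bondGap_ep (k j : Fin n) : bondGap k (ep n j) = 0 := by
  simp [bondGap_apply, ep]

lemma sum_mul_bondGap_eq'_smul_bondKick (c : Fin n → ℝ) (j : Fin n) :
    ∑ k, (c k * bondGap k (eq' n j)) • bondKick k =
      c j • bondKick j - c (j - 1) • bondKick (j - 1) := by
  have support (k : Fin n) : bondGap k (eq' n j) =
      (if k = j then 1 else 0) - if k = j - 1 then 1 else 0 := by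
    simp only [bondGap_apply, eq', Pi.single_apply, eq_sub_iff_add_eq]
  simp only [support, mul_sub, sub_smul, Finset.sum_sub_distrib, mul_ite, mul_one, mul_zero,
    ite_smul, zero_smul, Finset.sum_ite_eq', Finset.mem_univ, if_true]

-- For `n = 1` the bond is a loop: its elongation is constant, but its kick vanishes as well.
lemma bondGap_eq'_smul_bondKick (j : Fin n) :
    bondGap j (eq' n j) • bondKick j = bondKick j := by
  by_cases hloop : j + 1 = j
  · simp [bondKick, hloop]
  · simp [bondGap_apply, eq', hloop]

lemma bondGap_sub_one_eq'_smul_bondKick (j : Fin n) :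
    bondGap (j - 1) (eq' n j) • bondKick (j - 1) = -bondKick (j - 1) := by
  by_cases hloop : j - 1 = j
  · have : bondKick (j - 1) = 0 := by rw [bondKick, sub_add_cancel, hloop, sub_self]
    simp [this]
  · simp [bondGap_apply, eq', hloop]

lemma ep_add_one_mem_and_ep_sub_one_mem (S : Submodule ℝ (State n)) {j : Fin n} {a b c d : ℝ}
    (hj : ep n j ∈ S) (h₁ : a • bondKick j - b • bondKick (j - 1) ∈ S)
    (h₂ : c • bondKick j + d • bondKick (j - 1) ∈ S) (hdet : a * d + b * c ≠ 0) :
    ep n (j + 1) ∈ S ∧ ep n (j - 1) ∈ S := by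
  rw [sub_eq_add_neg, ← neg_smul] at h₁
  obtain ⟨hkick, hkick_pred⟩ :=
    mem_and_mem_of_det_ne_zero S h₁ h₂ (by rwa [neg_mul, sub_neg_eq_add])
  constructor
  · simpa [bondKick] using S.add_mem hkick hj
  · simpa [bondKick] using S.sub_mem hj hkick_pred

lemma drift_eq_sum_bonds (Φ : ℝ → ℝ) (x : State n) :
    drift n Φ x = (x.2, 0) + ∑ k, deriv Φ (bondGap k x) • bondKick k := by
  have momentum (i : Fin n) : (∑ k, deriv Φ (bondGap k x) • bondKick k).2 i =
      deriv Φ (bondGap (i - 1) x) - deriv Φ (bondGap i x) := by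
    simp [Prod.snd_sum, bondKick, ep, mul_sub, Pi.single_apply, ← sub_eq_iff_eq_add]
  ext i
  · simp [drift, bondKick, ep, Prod.fst_sum]
  · rw [Prod.snd_add, Pi.add_apply, momentum]
    simp [drift, bondGap_apply]

lemma hasFDerivAt_bondForce {ψ : ℝ → ℝ} {ψ' : ℝ} (k : Fin n) {x : State n}
    (hψ : HasDerivAt ψ ψ' (bondGap k x)) :
    HasFDerivAt (fun y => ψ (bondGap k y) • bondKick k)
      ((ψ' • bondGap k).smulRight (bondKick k)) x :=
  (hψ.comp_hasFDerivAt x (bondGap k).hasFDerivAt).smul_const (bondKick k)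

end Bonds

section Brackets

variable {n : ℕ} [NeZero n] {Φ φ' : ℝ → ℝ}

lemma fderiv_drift_apply (hφ : ∀ y, HasDerivAt (deriv Φ) (φ' y) y) (x v : State n) :
    fderiv ℝ (drift n Φ) x v =
      (v.2, 0) + ∑ k, (φ' (bondGap k x) * bondGap k v) • bondKick k := by
  have inertia : HasFDerivAt (fun y : State n => ((y.2, 0) : State n))
      ((ContinuousLinearMap.snd ℝ _ _).prod 0) x :=
    hasFDerivAt_snd.prodMk (hasFDerivAt_const 0 x)
  have interaction := HasFDerivAt.fun_sum fun (k : Fin n) (_ : k ∈ Finset.univ) =>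
    hasFDerivAt_bondForce k (hφ (bondGap k x))
  rw [funext (drift_eq_sum_bonds Φ), (inertia.fun_add interaction).fderiv]
  simp

lemma lieBracket_drift_ep (hφ : ∀ y, HasDerivAt (deriv Φ) (φ' y) y) (j : Fin n) :
    lieBracket (drift n Φ) (fun _ => ep n j) = fun _ => -eq' n j := by
  rw [lieBracket_const_right]
  funext x
  simp only [fderiv_drift_apply hφ, bondGap_ep, mul_zero, zero_smul, Finset.sum_const_zero,
    add_zero]
  rfl

lemma lieBracket_drift_lieBracket_drift_ep (hφ : ∀ y, HasDerivAt (deriv Φ) (φ' y) y)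
    (j : Fin n) :
    lieBracket (drift n Φ) (lieBracket (drift n Φ) (fun _ => ep n j)) = fun x =>
      φ' (bondGap j x) • bondKick j - φ' (bondGap (j - 1) x) • bondKick (j - 1) := by
  rw [lieBracket_drift_ep hφ, lieBracket_const_right]
  funext x
  rw [map_neg, neg_neg, fderiv_drift_apply hφ, sum_mul_bondGap_eq'_smul_bondKick]
  simp [eq']

lemma lieBracket_ad_sq_drift_ad_drift (hφ : ∀ y, HasDerivAt (deriv Φ) (φ' y) y) (j : Fin n)
    {x : State n} {c d : ℝ} (hc : HasDerivAt φ' c (bondGap j x))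
    (hd : HasDerivAt φ' d (bondGap (j - 1) x)) :
    lieBracket (lieBracket (drift n Φ) (lieBracket (drift n Φ) (fun _ => ep n j)))
        (lieBracket (drift n Φ) (fun _ => ep n j)) x =
      c • bondKick j + d • bondKick (j - 1) := by
  rw [lieBracket_drift_lieBracket_drift_ep hφ, lieBracket_drift_ep hφ, lieBracket_const_right]
  beta_reduce
  rw [map_neg, neg_neg, ((hasFDerivAt_bondForce j hc).fun_sub
    (hasFDerivAt_bondForce (j - 1) hd)).fderiv]
  simp [mul_smul, bondGap_eq'_smul_bondKick, bondGap_sub_one_eq'_smul_bondKick]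

end Brackets

theorem span_inclusion_general {n : ℕ} [NeZero n] {Φ φ φ' : ℝ → ℝ}
    (hΦ : ∀ y, HasDerivAt Φ (φ y) y) (hφ : ∀ y, HasDerivAt φ (φ' y) y)
    (j : Fin n) (x : State n) {c d : ℝ}
    (hc : HasDerivAt φ' c (x.1 j - x.1 (j + 1))) (hd : HasDerivAt φ' d (x.1 (j - 1) - x.1 j))
    (hdet : φ' (x.1 j - x.1 (j + 1)) * d + φ' (x.1 (j - 1) - x.1 j) * c ≠ 0) :
    Submodule.span ℝ ({drift n Φ x, ep n j, ep n (j + 1), ep n (j - 1)} : Set (State n)) ≤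
      Submodule.span ℝ
        ({drift n Φ x, ep n j,
          lieBracket (drift n Φ) (lieBracket (drift n Φ) (fun _ => ep n j)) x,
          lieBracket (lieBracket (drift n Φ) (lieBracket (drift n Φ) (fun _ => ep n j)))
            (lieBracket (drift n Φ) (fun _ => ep n j)) x} : Set (State n)) := by
  obtain rfl : deriv Φ = φ := deriv_eq hΦ
  have gap_pred : x.1 (j - 1) - x.1 j = bondGap (j - 1) x := by
    rw [bondGap_apply, sub_add_cancel]
  rw [gap_pred] at hd hdet
  rw [← bondGap_apply] at hc hdet
  rw [lieBracket_ad_sq_drift_ad_drift hφ j hc hd, lieBracket_drift_lieBracket_drift_ep hφ]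
  beta_reduce
  set S := Submodule.span ℝ ({drift n Φ x, ep n j,
    φ' (bondGap j x) • bondKick j - φ' (bondGap (j - 1) x) • bondKick (j - 1),
    c • bondKick j + d • bondKick (j - 1)} : Set (State n))
  have drift_mem : drift n Φ x ∈ S := Submodule.subset_span (by simp)
  have ep_mem : ep n j ∈ S := Submodule.subset_span (by simp)
  obtain ⟨ep_succ_mem, ep_pred_mem⟩ := ep_add_one_mem_and_ep_sub_one_mem S ep_mem
    (Submodule.subset_span (by simp)) (Submodule.subset_span (by simp)) hdet
  rw [Submodule.span_le]
  rintro _ (rfl | rfl | rfl | rfl)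
  exacts [drift_mem, ep_mem, ep_succ_mem, ep_pred_mem]

/-- Pointwise span inclusion at points where the determinant
`φ'(q₁−q₂)·φ''(qₙ−q₁) + φ'(qₙ−q₁)·φ''(q₁−q₂)` does not vanish. -/
theorem span_inclusion (n : ℕ) [NeZero n] (hn : 3 ≤ n) (Φ : ℝ → ℝ)
    (hΦ : ContDiff ℝ 3 Φ) (x : State n)
    (hdet : deriv (deriv Φ) (x.1 0 - x.1 1) * deriv (deriv (deriv Φ)) (x.1 (-1) - x.1 0) +
        deriv (deriv Φ) (x.1 (-1) - x.1 0) * deriv (deriv (deriv Φ)) (x.1 0 - x.1 1) ≠ 0) :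
    Submodule.span ℝ ({drift n Φ x, ep n 0, ep n (-1)} : Set (State n)) ≤
      Submodule.span ℝ
        ({drift n Φ x, ep n 0,
          lieBracket (drift n Φ) (lieBracket (drift n Φ) (fun _ => ep n 0)) x,
          lieBracket (lieBracket (drift n Φ) (lieBracket (drift n Φ) (fun _ => ep n 0)))
            (lieBracket (drift n Φ) (fun _ => ep n 0)) x} : Set (State n)) ∧
    ep n 0 ∈ Submodule.span ℝ
        ({drift n Φ x, ep n 0,
          lieBracket (drift n Φ) (lieBracket (drift n Φ) (fun _ => ep n 0)) x,
          lieBracket (lieBracket (drift n Φ) (lieBracket (drift n Φ) (fun _ => ep n 0)))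
            (lieBracket (drift n Φ) (fun _ => ep n 0)) x} : Set (State n)) ∧
    ep n 1 ∈ Submodule.span ℝ
        ({drift n Φ x, ep n 0,
          lieBracket (drift n Φ) (lieBracket (drift n Φ) (fun _ => ep n 0)) x,
          lieBracket (lieBracket (drift n Φ) (lieBracket (drift n Φ) (fun _ => ep n 0)))
            (lieBracket (drift n Φ) (fun _ => ep n 0)) x} : Set (State n)) ∧
    ep n (-1) ∈ Submodule.span ℝ
        ({drift n Φ x, ep n 0,
          lieBracket (drift n Φ) (lieBracket (drift n Φ) (fun _ => ep n 0)) x,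
          lieBracket (lieBracket (drift n Φ) (lieBracket (drift n Φ) (fun _ => ep n 0)))
            (lieBracket (drift n Φ) (fun _ => ep n 0)) x} : Set (State n)) := by
  have hφ : ContDiff ℝ 2 (deriv Φ) := hΦ.deriv'
  have hφ' : ContDiff ℝ 1 (deriv (deriv Φ)) := hφ.deriv'
  have mem := span_inclusion_general
    (fun y => (hΦ.differentiable (by norm_num) y).hasDerivAt)
    (fun y => (hφ.differentiable (by norm_num) y).hasDerivAt) 0 x
    (hφ'.differentiable one_ne_zero _).hasDerivAt (hφ'.differentiable one_ne_zero _).hasDerivAt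
    (by simpa only [zero_add, zero_sub] using hdet)
  simp only [zero_add, zero_sub] at mem
  refine ⟨(Submodule.span_mono (by grind)).trans mem, ?_, ?_, ?_⟩
  all_goals exact mem (Submodule.subset_span (by simp))
end
end

section
/- Bracket generating property for generic potentials (full orbits): Assume Φ is admissible and generic. Let L be the smallest set of smooth vector fields on ℝ^{2n} that contains f and g and is closed under Lie brackets. Then for every x ∈ ℝ^{2n}, the linear span of the set of evaluations {X(x) : X ∈ L} equals ℝ^{2n}; i.e. the pair {f, g} is bracket generating at every point of the state space. -/
/-!
Write `ψ = Φ''`, and enlarge the Lie algebra generated by `f` and `g` to the module it generates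
over the functions smooth near `x`. This does not change the span of the values at `x`, the Leibniz
rule keeps it closed under brackets, and in it one may divide by a coefficient that does not
vanish at `x`; so it suffices to find all the constant fields `∂/∂p_k`, `∂/∂q_k` in this module.

Once `∂/∂p_k` is there, so is `∂/∂q_k = [∂/∂p_k, f]`, and bracketing `f` repeatedly with `∂/∂q_k`
gives the fields
`ψ⁽ᵐ⁾(q_k - q_{k+1}) (∂/∂p_{k+1} - ∂/∂p_k) - (-1)ᵐ ψ⁽ᵐ⁾(q_{k-1} - q_k) (∂/∂p_k - ∂/∂p_{k-1})`.
Eliminating the second term between two orders `m`, `l` leaves a 2 × 2 minor of the jets of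
`t ↦ ψ(a + t)` and `t ↦ ψ(b - t)` at `0`, where `a = q_k - q_{k+1}` and `b = q_{k-1} - q_k`, times
`∂/∂p_{k+1} - ∂/∂p_k`. If all these minors vanished at `x`, analyticity would give `ψ = 0` or
`ψ(b - t) = c ψ(a + t)` for all `t`; applying this reflection twice yields `c = ±1` or `ψ = 0`, so
`ψ` would be even or odd about `(a + b) / 2`, against genericity. Hence `∂/∂p_{k+1}` is in the
module, and one goes round the ring from the controlled particle.
-/

open scoped BigOperators
open MeasureTheory Filter Set

noncomputable section

/-- The smallest family of vector fields containing `F` and closed under Lie brackets. -/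
inductive LieGen (n : ℕ) (F : Set (State n → State n)) : (State n → State n) → Prop
  | base (X : State n → State n) (hX : X ∈ F) : LieGen n F X
  | bracket (X Y : State n → State n) (hX : LieGen n F X) (hY : LieGen n F Y) :
      LieGen n F (lieBracket X Y)

open scoped Topology ContDiff

/-! ### Jets of analytic functions of one variable -/

lemma even_or_odd_about_midpoint_of_reflection {K : Type*} [Field K] [NeZero (2 : K)] {ψ : K → K}
    {a b c : K} (h : ∀ t, ψ (b - t) = c * ψ (a + t)) :
    (∀ t, ψ ((a + b) / 2 + t) = ψ ((a + b) / 2 - t)) ∨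
      ∀ t, ψ ((a + b) / 2 + t) = -ψ ((a + b) / 2 - t) := by
  have hrefl (s : K) : ψ (a + b - s) = c * ψ s := by
    convert h (s - a) using 2 <;> ring_nf
  have hmid (t : K) : ψ ((a + b) / 2 + t) = c * ψ ((a + b) / 2 - t) := by
    rw [← hrefl, ← sub_add, sub_half]
  by_cases hψ : ∀ t, ψ t = 0
  · simp [hψ]
  obtain ⟨s, hs⟩ := not_forall.1 hψ
  have hinvol : ψ s = c * ψ (a + b - s) := by simpa using hrefl (a + b - s)
  have hsq : c * c = 1 := mul_right_cancel₀ hs (by linear_combination -hinvol - c * hrefl s)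
  rcases mul_self_eq_one_iff.1 hsq with rfl | rfl
  · exact .inl fun t => by simpa using hmid t
  · exact .inr fun t => by simpa using hmid t

section Jets

variable {𝕜 : Type*} [NontriviallyNormedField 𝕜] [CharZero 𝕜] [PreconnectedSpace 𝕜]

lemma eq_zero_of_iteratedDeriv_eq_zero {F : Type*} [NormedAddCommGroup F] [NormedSpace 𝕜 F]
    [CompleteSpace F] {f : 𝕜 → F} (hf : ContDiff 𝕜 ω f) {x : 𝕜}
    (hx : ∀ m, iteratedDeriv m f x = 0) : f = 0 := by
  have hf' : AnalyticOnNhd 𝕜 f univ := hf.analyticOnNhd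
  have horder : analyticOrderAt f x = ⊤ := ENat.eq_top_iff_forall_ge.2 fun m =>
    (natCast_le_analyticOrderAt_iff_iteratedDeriv_eq_zero (hf' x trivial)).2 fun i _ => hx i
  exact hf'.eq_of_eventuallyEq analyticOnNhd_const (analyticOrderAt_eq_top.1 horder)

variable [CompleteSpace 𝕜]

lemma eq_zero_or_exists_eq_smul_of_jet_minors_eq_zero {f g : 𝕜 → 𝕜} (hf : ContDiff 𝕜 ω f)
    (hg : ContDiff 𝕜 ω g) {x : 𝕜}
    (h : ∀ m l, iteratedDeriv m f x * iteratedDeriv l g x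
      = iteratedDeriv l f x * iteratedDeriv m g x) :
    f = 0 ∨ ∃ c : 𝕜, g = c • f := by
  refine or_iff_not_imp_left.2 fun hf0 => ?_
  obtain ⟨m, hm⟩ : ∃ m, iteratedDeriv m f x ≠ 0 := by
    contrapose! hf0
    exact eq_zero_of_iteratedDeriv_eq_zero hf hf0
  set c := iteratedDeriv m g x / iteratedDeriv m f x with hc
  have hcf : ContDiff 𝕜 ω (c • f) := hf.const_smul c
  refine ⟨c, sub_eq_zero.1 (eq_zero_of_iteratedDeriv_eq_zero (x := x) (hg.sub hcf) fun l => ?_)⟩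
  rw [iteratedDeriv_sub (hg.of_le le_top).contDiffAt (hcf.of_le le_top).contDiffAt,
    iteratedDeriv_const_smul_field, smul_eq_mul, sub_eq_zero, hc]
  field_simp
  linear_combination h m l

lemma even_or_odd_about_midpoint_of_jet_minors_eq_zero {ψ : 𝕜 → 𝕜} (hψ : ContDiff 𝕜 ω ψ) {a b : 𝕜}
    (h : ∀ m l, iteratedDeriv m ψ a * ((-1) ^ l * iteratedDeriv l ψ b)
      = iteratedDeriv l ψ a * ((-1) ^ m * iteratedDeriv m ψ b)) :
    (∀ t, ψ ((a + b) / 2 + t) = ψ ((a + b) / 2 - t)) ∨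
      ∀ t, ψ ((a + b) / 2 + t) = -ψ ((a + b) / 2 - t) := by
  have hminors := eq_zero_or_exists_eq_smul_of_jet_minors_eq_zero
    (f := fun t => ψ (a + t)) (g := fun t => ψ (b - t)) (x := 0)
    (hψ.comp (by fun_prop)) (hψ.comp (by fun_prop)) fun m l => by
      simpa [iteratedDeriv_comp_const_add, iteratedDeriv_comp_const_sub] using h m l
  rcases hminors with hzero | ⟨c, hc⟩
  · have hψ0 (t : 𝕜) : ψ t = 0 := by simpa using congrFun hzero (t - a)
    simp [hψ0]
  · exact even_or_odd_about_midpoint_of_reflection fun t => congrFun hc t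

end Jets

lemma Generic.exists_jet_minor_ne {Φ : ℝ → ℝ} (hgen : Generic Φ)
    (hΦ : ContDiff ℝ ω (deriv (deriv Φ))) (a b : ℝ) :
    ∃ m l, iteratedDeriv m (deriv (deriv Φ)) a * ((-1) ^ l * iteratedDeriv l (deriv (deriv Φ)) b)
      ≠ iteratedDeriv l (deriv (deriv Φ)) a
        * ((-1) ^ m * iteratedDeriv m (deriv (deriv Φ)) b) := by
  by_contra! h
  exact (even_or_odd_about_midpoint_of_jet_minors_eq_zero hΦ h).elim
    (hgen ((a + b) / 2)).1 (hgen ((a + b) / 2)).2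

/-! ### Modules of vector fields over germs of smooth functions -/

section LocalSpan

variable {𝕜 : Type*} [NontriviallyNormedField 𝕜]
  {E : Type*} [NormedAddCommGroup E] [NormedSpace 𝕜 E]
  {F : Type*} [NormedAddCommGroup F] [NormedSpace 𝕜 F]

variable (𝕜) in
/-- The ring of functions smooth at `x`, the coefficients of `localSpan`. They are kept as functions
rather than germs, so that they act pointwise on vector fields. -/
def smoothCoeff (x : E) : Subring (E → 𝕜) where
  carrier := {c | ContDiffAt 𝕜 ∞ c x}
  mul_mem' {_ _} (hc : ContDiffAt 𝕜 ∞ _ x) (hd : ContDiffAt 𝕜 ∞ _ x) := hc.mul hd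
  one_mem' := show ContDiffAt 𝕜 ∞ (fun _ => 1) x from contDiffAt_const
  add_mem' {_ _} (hc : ContDiffAt 𝕜 ∞ _ x) (hd : ContDiffAt 𝕜 ∞ _ x) := hc.add hd
  zero_mem' := show ContDiffAt 𝕜 ∞ (fun _ => 0) x from contDiffAt_const
  neg_mem' {_} (hc : ContDiffAt 𝕜 ∞ _ x) := hc.neg

variable (𝕜) in
/-- The fields which near `x` are combinations of members of `S` with coefficients smooth at `x`.
Adding the fields vanishing near `x` to the generators makes membership depend on germs only. -/
def localSpan (S : Set (E → F)) (x : E) : Submodule (smoothCoeff 𝕜 x) (E → F) :=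
  Submodule.span (smoothCoeff 𝕜 x) (S ∪ {X | X =ᶠ[𝓝 x] 0})

variable {S : Set (E → F)} {x : E} {X Y : E → F} {c : E → 𝕜}

lemma subset_localSpan : S ⊆ localSpan 𝕜 S x :=
  fun _ hX => Submodule.subset_span (.inl hX)

lemma mem_localSpan_of_eventuallyEq (hX : X ∈ localSpan 𝕜 S x) (h : Y =ᶠ[𝓝 x] X) :
    Y ∈ localSpan 𝕜 S x := by
  have hsub : Y - X ∈ localSpan 𝕜 S x :=
    Submodule.subset_span (.inr (by simpa using h.sub (.refl _ X)))
  simpa using add_mem hsub hX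

lemma smul_mem_localSpan (hc : ContDiffAt 𝕜 ∞ c x) (hX : X ∈ localSpan 𝕜 S x) :
    (fun y => c y • X y) ∈ localSpan 𝕜 S x :=
  (localSpan 𝕜 S x).smul_mem (⟨c, hc⟩ : smoothCoeff 𝕜 x) hX

lemma mem_localSpan_of_smul_mem [CompleteSpace 𝕜] (hc : ContDiffAt 𝕜 ∞ c x) (hcx : c x ≠ 0)
    (h : (fun y => c y • X y) ∈ localSpan 𝕜 S x) : X ∈ localSpan 𝕜 S x := by
  refine mem_localSpan_of_eventuallyEq (smul_mem_localSpan (hc.inv hcx) h) ?_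
  filter_upwards [hc.continuousAt.eventually_ne hcx] with y hy
  exact (inv_smul_smul₀ hy (X y)).symm

lemma contDiffAt_of_mem_localSpan (hS : ∀ Z ∈ S, ContDiffAt 𝕜 ∞ Z x)
    (hX : X ∈ localSpan 𝕜 S x) : ContDiffAt 𝕜 ∞ X x := by
  induction hX using Submodule.span_induction with
  | mem Z hZ =>
    exact hZ.elim (hS Z) fun hZ => contDiffAt_const.congr_of_eventuallyEq hZ
  | zero => exact contDiffAt_const
  | add Z W _ _ hZ hW => exact hZ.add hW
  | smul c Z _ hZ => exact ContDiffAt.smul c.2 hZ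

lemma apply_mem_span_of_mem_localSpan (hX : X ∈ localSpan 𝕜 S x) :
    X x ∈ Submodule.span 𝕜 ((fun Z => Z x) '' S) := by
  induction hX using Submodule.span_induction with
  | mem Z hZ =>
    rcases hZ with hZ | hZ
    · exact Submodule.subset_span ⟨Z, hZ, rfl⟩
    · simp [hZ.eq_of_nhds]
  | zero => exact zero_mem _
  | add Z W _ _ hZ hW => exact add_mem hZ hW
  | smul c Z _ hZ => exact Submodule.smul_mem _ (c.1 x) hZ

end LocalSpan

section LieFamily

variable {𝕜 : Type*} [NontriviallyNormedField 𝕜]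
  {E : Type*} [NormedAddCommGroup E] [NormedSpace 𝕜 E]

variable (𝕜) in
/-- A family of smooth vector fields closed under Lie brackets. Closure under linear combinations is
not required. -/
structure IsSmoothLieFamily (S : Set (E → E)) : Prop where
  contDiff : ∀ X ∈ S, ContDiff 𝕜 ∞ X
  lieBracket_mem : ∀ X ∈ S, ∀ Y ∈ S, VectorField.lieBracket 𝕜 X Y ∈ S

variable {S : Set (E → E)} {x : E} {X Y : E → E}

lemma eventually_differentiableAt_of_contDiffAt {F : Type*} [NormedAddCommGroup F]
    [NormedSpace 𝕜 F] {f : E → F} {m : ℕ∞ω} (hf : ContDiffAt 𝕜 m f x) (hm : 1 ≤ m) :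
    ∀ᶠ y in 𝓝 x, DifferentiableAt 𝕜 f y :=
  ((hf.of_le hm).eventually (by simp)).mono fun _ hy => hy.differentiableAt one_ne_zero

lemma lieBracket_mem_localSpan_of_forall_mem (hS : ∀ Z ∈ S, ContDiffAt 𝕜 ∞ Z x)
    (hY : ContDiffAt 𝕜 ∞ Y x) (hSY : ∀ Z ∈ S, VectorField.lieBracket 𝕜 Z Y ∈ localSpan 𝕜 S x)
    (hX : X ∈ localSpan 𝕜 S x) : VectorField.lieBracket 𝕜 X Y ∈ localSpan 𝕜 S x := by
  induction hX using Submodule.span_induction with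
  | mem Z hZ =>
    rcases hZ with hZ | hZ
    · exact hSY Z hZ
    · refine mem_localSpan_of_eventuallyEq (zero_mem _) ?_
      simpa using Filter.EventuallyEq.lieBracket_vectorField (𝕜 := 𝕜) hZ (.refl _ Y)
  | zero => simp
  | add Z W hZ hW ihZ ihW =>
    refine mem_localSpan_of_eventuallyEq (add_mem ihZ ihW) ?_
    filter_upwards [
      eventually_differentiableAt_of_contDiffAt (contDiffAt_of_mem_localSpan hS hZ) (by simp),
      eventually_differentiableAt_of_contDiffAt (contDiffAt_of_mem_localSpan hS hW) (by simp)]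
      with y hZy hWy
    exact VectorField.lieBracket_add_left hZy hWy
  | smul c Z hZ ih =>
    have hc : ContDiffAt 𝕜 ∞ c.1 x := c.2
    have hcY : ContDiffAt 𝕜 ∞ (fun y => -fderiv 𝕜 c.1 y (Y y)) x :=
      ((hc.fderiv_right (by simp)).clm_apply hY).neg
    refine mem_localSpan_of_eventuallyEq
      (add_mem (smul_mem_localSpan hcY hZ) (smul_mem_localSpan hc ih)) ?_
    filter_upwards [eventually_differentiableAt_of_contDiffAt hc (by simp),
      eventually_differentiableAt_of_contDiffAt (contDiffAt_of_mem_localSpan hS hZ) (by simp)]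
      with y hcy hZy
    exact VectorField.lieBracket_smul_left hcy hZy

lemma lieBracket_mem_localSpan_comm :
    VectorField.lieBracket 𝕜 X Y ∈ localSpan 𝕜 S x ↔
      VectorField.lieBracket 𝕜 Y X ∈ localSpan 𝕜 S x := by
  rw [← neg_mem_iff]
  congr! 1
  funext y
  exact VectorField.lieBracket_swap.symm

lemma IsSmoothLieFamily.lieBracket_mem_localSpan (hS : IsSmoothLieFamily 𝕜 S)
    (hX : X ∈ localSpan 𝕜 S x) (hY : Y ∈ localSpan 𝕜 S x) :
    VectorField.lieBracket 𝕜 X Y ∈ localSpan 𝕜 S x := by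
  have hS' : ∀ Z ∈ S, ContDiffAt 𝕜 ∞ Z x := fun Z hZ => (hS.contDiff Z hZ).contDiffAt
  refine lieBracket_mem_localSpan_of_forall_mem hS' (contDiffAt_of_mem_localSpan hS' hY)
    (fun Z hZ => lieBracket_mem_localSpan_comm.1 ?_) hX
  exact lieBracket_mem_localSpan_of_forall_mem hS' (hS' Z hZ)
    (fun W hW => subset_localSpan (hS.lieBracket_mem W hW Z hZ)) hY

end LieFamily

lemma LieGen.contDiff {n : ℕ} {F : Set (State n → State n)} (hF : ∀ X ∈ F, ContDiff ℝ ∞ X)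
    {X : State n → State n} (hX : LieGen n F X) : ContDiff ℝ ∞ X := by
  induction hX with
  | base X hX => exact hF X hX
  | bracket X Y _ _ hX hY => exact hX.lieBracket_vectorField hY (by simp)

lemma LieGen.isSmoothLieFamily {n : ℕ} {F : Set (State n → State n)}
    (hF : ∀ X ∈ F, ContDiff ℝ ∞ X) : IsSmoothLieFamily ℝ {X | LieGen n F X} where
  contDiff _ hX := hX.contDiff hF
  lieBracket_mem X hX Y hY := .bracket X Y hX hY

/-! ### The periodic chain -/

lemma hasFDerivAt_comp_clm_smul_const {𝕜 E F : Type*} [NontriviallyNormedField 𝕜]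
    [NormedAddCommGroup E] [NormedSpace 𝕜 E] [NormedAddCommGroup F] [NormedSpace 𝕜 F]
    {g : 𝕜 → 𝕜} (ℓ : E →L[𝕜] 𝕜) (w : F) {y : E} (hg : DifferentiableAt 𝕜 g (ℓ y)) :
    HasFDerivAt (fun y => g (ℓ y) • w) ((deriv g (ℓ y) • ℓ).smulRight w) y :=
  (hg.hasDerivAt.comp_hasFDerivAt y ℓ.hasFDerivAt).smul_const w

section Chain

variable {n : ℕ} [NeZero n]

/-- The extension `q_k - q_{k+1}` of the bond between the particles `k` and `k + 1`. -/
def gap (k : Fin n) : State n →L[ℝ] ℝ :=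
  (.proj k - .proj (k + 1) : (Fin n → ℝ) →L[ℝ] ℝ).comp (.fst ℝ (Fin n → ℝ) (Fin n → ℝ))

/-- The direction `∂/∂p_{k+1} - ∂/∂p_k` in which the bond between the particles `k` and `k + 1`
transfers momentum. -/
def bond (k : Fin n) : State n := ep n (k + 1) - ep n k

/-- With `ψ` the second derivative of the potential, the `(m + 1)`-st derivative along `∂/∂q_k` of
the forces exerted by the two bonds at the particle `k`. -/
def forceJet (ψ : ℝ → ℝ) (k : Fin n) (m : ℕ) (y : State n) : State n :=
  iteratedDeriv m ψ (gap k y) • bond k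
    - ((-1) ^ m * iteratedDeriv m ψ (gap (k - 1) y)) • bond (k - 1)

lemma gap_apply (k : Fin n) (y : State n) : gap k y = y.1 k - y.1 (k + 1) := rfl

lemma gap_eq' (j k : Fin n) :
    gap j (eq' n k) = (if j = k then 1 else 0) - if j = k - 1 then 1 else 0 := by
  simp [gap_apply, eq', Pi.single_apply, eq_sub_iff_add_eq]

-- For `n = 1` the coefficient is `0` instead of `1`, but then `bond k = 0`.
lemma gap_eq'_self_smul_bond (k : Fin n) : gap k (eq' n k) • bond k = bond k := by
  by_cases h : k + 1 = k
  · simp [bond, h]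
  · simp [gap_apply, eq', h]

lemma gap_sub_one_eq'_smul_bond (k : Fin n) :
    gap (k - 1) (eq' n k) • bond (k - 1) = -bond (k - 1) := by
  by_cases h : k - 1 = k
  · have hsucc : k + 1 = k := by simpa using h
    simp [bond, h, hsucc]
  · simp [gap_apply, eq', h]

lemma drift_eq_sum_bond (Φ : ℝ → ℝ) :
    drift n Φ = fun y => (y.2, 0) + ∑ j, deriv Φ (gap j y) • bond j := by
  funext y
  ext i
  · simp [drift, bond, ep, Prod.fst_sum]
  · simp [drift, bond, ep, Prod.snd_sum, gap_apply, Pi.single_apply, mul_sub,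
      Finset.sum_sub_distrib, ← sub_eq_iff_eq_add]

lemma fderiv_drift {Φ : ℝ → ℝ} (hΦ : Differentiable ℝ (deriv Φ)) (y v : State n) :
    fderiv ℝ (drift n Φ) y v
      = (v.2, 0) + ∑ j, (deriv (deriv Φ) (gap j y) * gap j v) • bond j := by
  have h := (hasFDerivAt_snd.prodMk (hasFDerivAt_const (0 : Fin n → ℝ) y)).fun_add
    (HasFDerivAt.fun_sum (u := Finset.univ) fun j _ =>
      hasFDerivAt_comp_clm_smul_const (gap j) (bond j) (hΦ _))
  rw [drift_eq_sum_bond, HasFDerivAt.fderiv h]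
  simp

lemma contDiff_drift {m : ℕ∞ω} {Φ : ℝ → ℝ} (hΦ : ContDiff ℝ m (deriv Φ)) :
    ContDiff ℝ m (drift n Φ) := by
  rw [drift_eq_sum_bond]
  fun_prop

lemma lieBracket_ep_drift {Φ : ℝ → ℝ} (hΦ : Differentiable ℝ (deriv Φ)) (k : Fin n) :
    VectorField.lieBracket ℝ (fun _ => ep n k) (drift n Φ) = fun _ => eq' n k := by
  funext y
  simp [VectorField.lieBracket, fderiv_drift hΦ, ep, eq', gap_apply]

lemma lieBracket_eq'_drift {Φ : ℝ → ℝ} (hΦ : Differentiable ℝ (deriv Φ)) (k : Fin n) :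
    VectorField.lieBracket ℝ (fun _ => eq' n k) (drift n Φ)
      = forceJet (deriv (deriv Φ)) k 0 := by
  funext y
  have hmomentum : (eq' n k).2 = 0 := rfl
  simp [VectorField.lieBracket, fderiv_drift hΦ, hmomentum, gap_eq', mul_sub, sub_smul,
    Finset.sum_sub_distrib, forceJet]

lemma lieBracket_eq'_forceJet {ψ : ℝ → ℝ} {m : ℕ} (hψ : Differentiable ℝ (iteratedDeriv m ψ))
    (k : Fin n) :
    VectorField.lieBracket ℝ (fun _ => eq' n k) (forceJet ψ k m) = forceJet ψ k (m + 1) := by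
  funext y
  have h := (hasFDerivAt_comp_clm_smul_const (gap k) (bond k) (hψ (gap k y))).sub
    (hasFDerivAt_comp_clm_smul_const (gap (k - 1)) (bond (k - 1))
      (hψ.const_mul ((-1) ^ m) (gap (k - 1) y)))
  have hfderiv : fderiv ℝ (forceJet ψ k m) y = _ := h.fderiv
  simp [VectorField.lieBracket, hfderiv, forceJet, mul_smul, gap_eq'_self_smul_bond,
    gap_sub_one_eq'_smul_bond, iteratedDeriv_succ, pow_succ]

variable {S : Set (State n → State n)} {Φ : ℝ → ℝ} {x : State n} {k : Fin n}

lemma eq'_mem_localSpan_of_ep_mem (hS : IsSmoothLieFamily ℝ S)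
    (hΦ : Differentiable ℝ (deriv Φ)) (hdrift : drift n Φ ∈ S)
    (hk : (fun _ => ep n k) ∈ localSpan ℝ S x) : (fun _ => eq' n k) ∈ localSpan ℝ S x :=
  lieBracket_ep_drift hΦ k ▸ hS.lieBracket_mem_localSpan hk (subset_localSpan hdrift)

lemma forceJet_mem_localSpan_of_ep_mem (hS : IsSmoothLieFamily ℝ S)
    (hΦ : ContDiff ℝ ∞ (deriv Φ)) (hdrift : drift n Φ ∈ S)
    (hk : (fun _ => ep n k) ∈ localSpan ℝ S x) (m : ℕ) :
    forceJet (deriv (deriv Φ)) k m ∈ localSpan ℝ S x := by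
  have hφ : Differentiable ℝ (deriv Φ) := hΦ.differentiable (by simp)
  have hq := eq'_mem_localSpan_of_ep_mem hS hφ hdrift hk
  induction m with
  | zero =>
    exact lieBracket_eq'_drift hφ k ▸ hS.lieBracket_mem_localSpan hq (subset_localSpan hdrift)
  | succ m ih =>
    have hm : Differentiable ℝ (iteratedDeriv m (deriv (deriv Φ))) := by
      rw [← iteratedDeriv_succ']
      exact hΦ.differentiable_iteratedDeriv (m + 1) (mod_cast ENat.natCast_lt_top _)
    exact lieBracket_eq'_forceJet hm k ▸ hS.lieBracket_mem_localSpan hq ih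

lemma bond_mem_localSpan_of_forceJet_mem {ψ : ℝ → ℝ} (hψ : ContDiff ℝ ∞ ψ)
    (hforce : ∀ m, forceJet ψ k m ∈ localSpan ℝ S x)
    (hminor : ∃ m l, iteratedDeriv m ψ (gap k x) * ((-1) ^ l * iteratedDeriv l ψ (gap (k - 1) x))
      ≠ iteratedDeriv l ψ (gap k x) * ((-1) ^ m * iteratedDeriv m ψ (gap (k - 1) x))) :
    (fun _ => bond k) ∈ localSpan ℝ S x := by
  obtain ⟨m, l, hml⟩ := hminor
  have hψ' (m : ℕ) : ContDiff ℝ ∞ (iteratedDeriv m ψ) := by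
    rw [iteratedDeriv_eq_iterate]
    exact hψ.iterate_deriv m
  have hleft (m : ℕ) : ContDiffAt ℝ ∞ (fun y => iteratedDeriv m ψ (gap k y)) x := by fun_prop
  have hright (m : ℕ) :
      ContDiffAt ℝ ∞ (fun y => (-1) ^ m * iteratedDeriv m ψ (gap (k - 1) y)) x := by fun_prop
  refine mem_localSpan_of_smul_mem
    (((hleft m).mul (hright l)).sub ((hleft l).mul (hright m))) (sub_ne_zero.2 hml) ?_
  convert sub_mem (smul_mem_localSpan (hright l) (hforce m))
    (smul_mem_localSpan (hright m) (hforce l)) using 1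
  funext y
  simp only [forceJet, Pi.sub_apply]
  module

lemma ep_succ_mem_localSpan_of_ep_mem (hS : IsSmoothLieFamily ℝ S) (hΦ : ContDiff ℝ ω (deriv Φ))
    (hgen : Generic Φ) (hdrift : drift n Φ ∈ S) (hk : (fun _ => ep n k) ∈ localSpan ℝ S x) :
    (fun _ => ep n (k + 1)) ∈ localSpan ℝ S x := by
  have hψ : ContDiff ℝ ω (deriv (deriv Φ)) := hΦ.deriv'
  have hbond : (fun _ => bond k) ∈ localSpan ℝ S x :=
    bond_mem_localSpan_of_forceJet_mem (hψ.of_le le_top)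
      (forceJet_mem_localSpan_of_ep_mem hS (hΦ.of_le le_top) hdrift hk)
      (hgen.exists_jet_minor_ne hψ _ _)
  simpa [bond, Pi.add_def] using add_mem hbond hk

lemma forall_of_cyclic_step {P : Fin n → Prop} {j : Fin n} (hj : P j)
    (hstep : ∀ k, P k → P (k + 1)) (k : Fin n) : P k := by
  have h (m : ℕ) : P (j + Fin.ofNat n m) := by
    induction m with
    | zero => simpa using hj
    | succ m ih =>
      have hsucc : Fin.ofNat n (m + 1) = Fin.ofNat n m + 1 := by
        ext
        simp [Fin.val_add]
      rw [hsucc, ← add_assoc]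
      exact hstep _ ih
  simpa using h (k - j).val

lemma span_eq_top_of_eq'_mem_of_ep_mem {V : Submodule ℝ (State n)} (hq : ∀ k, eq' n k ∈ V)
    (hp : ∀ k, ep n k ∈ V) : V = ⊤ := by
  refine eq_top_iff.2 fun v _ => ?_
  have hv : v = ∑ k, v.1 k • eq' n k + ∑ k, v.2 k • ep n k := by
    ext i <;> simp [eq', ep, Prod.fst_sum, Prod.snd_sum, Finset.sum_apply, Pi.single_apply]
  rw [hv]
  exact add_mem (sum_mem fun k _ => V.smul_mem _ (hq k)) (sum_mem fun k _ => V.smul_mem _ (hp k))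

end Chain

theorem bracket_generating_generic_general (n : ℕ) [NeZero n] (j : Fin n) (Φ : ℝ → ℝ)
    (hΦ : ∀ t, AnalyticAt ℝ Φ t) (hgen : Generic Φ) (x : State n) :
    Submodule.span ℝ
      {v : State n | ∃ X : State n → State n,
        LieGen n {drift n Φ, fun _ => ep n j} X ∧ X x = v} = ⊤ := by
  have hφ : ContDiff ℝ ω (deriv Φ) :=
    contDiff_omega_iff_analyticOnNhd.2 fun t _ => (hΦ t).deriv
  have hφ' : ContDiff ℝ ∞ (deriv Φ) := hφ.of_le le_top
  set S := {X | LieGen n {drift n Φ, fun _ => ep n j} X}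
  have hS : IsSmoothLieFamily ℝ S := LieGen.isSmoothLieFamily <| by
    rintro X (rfl | rfl)
    exacts [contDiff_drift hφ', contDiff_const]
  have hdrift : drift n Φ ∈ S := .base _ (by simp)
  have hcontrol : (fun _ => ep n j) ∈ S := .base _ (by simp)
  have hp : ∀ k, (fun _ => ep n k) ∈ localSpan ℝ S x :=
    forall_of_cyclic_step (subset_localSpan hcontrol) fun k =>
      ep_succ_mem_localSpan_of_ep_mem hS hφ hgen hdrift
  have hq (k : Fin n) : (fun _ => eq' n k) ∈ localSpan ℝ S x :=
    eq'_mem_localSpan_of_ep_mem hS (hφ'.differentiable (by simp)) hdrift (hp k)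
  exact span_eq_top_of_eq'_mem_of_ep_mem (fun k => apply_mem_span_of_mem_localSpan (hq k))
    fun k => apply_mem_span_of_mem_localSpan (hp k)

/-- For admissible generic `Φ`, the pair `{f, g}` is bracket generating at
every point of the state space: evaluations of the bracket-closure of `{f,g}` span ℝ^{2n}. -/
theorem bracket_generating_generic (n : ℕ) [NeZero n] (hn : 3 ≤ n) (Φ : ℝ → ℝ)
    (hadm : Admissible Φ) (hgen : Generic Φ) :
    ∀ x : State n,
      Submodule.span ℝ
        {v : State n | ∃ X : State n → State n,
          LieGen n {drift n Φ, fun _ => ep n 0} X ∧ X x = v} = ⊤ := by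
  exact bracket_generating_generic_general n 0 Φ hadm.1 hgen
end
end

section
/- Low-dimensional invariant plane for the single forced periodic trimer: Let b ∈ ℝ, let F : ℝ → ℝ be a continuously differentiable odd function with F(−3b) = 0, let κ ∈ ℝ, and set φ(t) = F(t − b) + κ. Consider the controlled periodic trimer: q̇ᵢ = pᵢ (i = 1,2,3), ṗ₁ = φ(q₃−q₁) − φ(q₁−q₂) + u(t), ṗ₂ = φ(q₁−q₂) − φ(q₂−q₃), ṗ₃ = φ(q₂−q₃) − φ(q₃−q₁), where u : [0,θ] → ℝ is any measurable essentially bounded control. If an absolutely continuous solution (q(t), p(t)) on [0,θ] satisfies q₃(0) − q₂(0) = 2b and p₃(0) = p₂(0), then q₃(t) − q₂(t) = 2b and p₃(t) = p₂(t) for all t ∈ [0,θ]; i.e. the 4-dimensional plane Π_b : {p₃ − p₂ = 0, q₃ − q₂ = 2b} is invariant for the control system, so every orbit through a point of Π_b is contained in Π_b. -/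
/-!
The deviations `x = q₃ - q₂ - 2b` and `v = p₃ - p₂` from the plane satisfy `x' = v`, and the
control, which acts on `P₁` only, does not enter `v'`. With `c = q₂ - q₁ + b`, the oddness of `F`
and `F (-3b) = 0` give `v' = 2 (F (-3b - x) - F (-3b)) - (F (c + x) - F c)`. All arguments of `F`
stay in a compact set, on which `F` is Lipschitz, so `‖v'‖ ≤ C ‖x‖`, and Grönwall's inequality for
the pair `(x, v)` forces both to vanish.
-/

open MeasureTheory Filter Set

noncomputable section

section Calculus

variable {E : Type*} [NormedAddCommGroup E] [NormedSpace ℝ E] {a c : ℝ}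

lemma hasDerivWithinAt_Icc_of_eq_add_integral [CompleteSpace E] {f g : ℝ → E}
    (hg : ContinuousOn g (Icc a c)) (hf : ∀ t ∈ Icc a c, f t = f a + ∫ s in a..t, g s) :
    ∀ t ∈ Icc a c, HasDerivWithinAt f (g t) (Icc a c) t := by
  intro t ht
  have : Fact (t ∈ Icc a c) := ⟨ht⟩
  have hint : IntervalIntegrable g volume a t :=
    (hg.mono (Icc_subset_Icc_right ht.2)).intervalIntegrable_of_Icc ht.1
  have hderiv : HasDerivWithinAt (fun r ↦ ∫ s in a..r, g s) (g t) (Icc a c) t :=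
    intervalIntegral.integral_hasDerivWithinAt_right hint
      (hg.stronglyMeasurableAtFilter_nhdsWithin measurableSet_Icc t) (hg t ht)
  exact (hderiv.const_add (f a)).congr hf (hf t ht)

lemma eq_zero_of_norm_second_deriv_le {x v w : ℝ → E} {C : ℝ}
    (hx : ∀ t ∈ Icc a c, HasDerivWithinAt x (v t) (Icc a c) t)
    (hv : ∀ t ∈ Icc a c, HasDerivWithinAt v (w t) (Icc a c) t)
    (hxa : x a = 0) (hva : v a = 0) (hw : ∀ t ∈ Icc a c, ‖w t‖ ≤ C * ‖x t‖) :
    ∀ t ∈ Icc a c, x t = 0 ∧ v t = 0 := by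
  have hderiv : ∀ t ∈ Icc a c,
      HasDerivWithinAt (fun s ↦ (x s, v s)) (v t, w t) (Icc a c) t :=
    fun t ht ↦ (hx t ht).prodMk (hv t ht)
  have hderiv_right : ∀ t ∈ Ico a c,
      HasDerivWithinAt (fun s ↦ (x s, v s)) (v t, w t) (Ici t) t := fun t ht ↦
    (hderiv t (Ico_subset_Icc_self ht)).mono_of_mem_nhdsWithin (Icc_mem_nhdsGE_of_mem ht)
  have hbound : ∀ t ∈ Ico a c, ‖(v t, w t)‖ ≤ max 1 C * ‖(x t, v t)‖ := by
    intro t ht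
    refine norm_prod_le_iff.2 ⟨?_, ?_⟩
    · calc ‖v t‖ = 1 * ‖v t‖ := (one_mul _).symm
        _ ≤ max 1 C * ‖(x t, v t)‖ := by
          gcongr
          exacts [le_max_left 1 C, norm_snd_le (x t, v t)]
    · calc ‖w t‖ ≤ C * ‖x t‖ := hw t (Ico_subset_Icc_self ht)
        _ ≤ max 1 C * ‖(x t, v t)‖ := by
          gcongr
          exacts [le_max_right 1 C, norm_fst_le (x t, v t)]
  intro t ht
  exact Prod.mk_eq_zero.1 (eq_zero_of_abs_deriv_le_mul_abs_self_of_eq_zero_right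
    (fun s hs ↦ (hderiv s hs).continuousWithinAt) hderiv_right
    (Prod.mk_eq_zero.2 ⟨hxa, hva⟩) hbound t ht)

end Calculus

lemma exists_dist_comp_le_mul_dist_of_isCompact {X α β : Type*} [TopologicalSpace X]
    [PseudoMetricSpace α] [PseudoMetricSpace β] {F : α → β} (hF : LocallyLipschitz F)
    {K : Set X} (hK : IsCompact K) {f g : X → α} (hf : ContinuousOn f K) (hg : ContinuousOn g K) :
    ∃ L : ℝ, ∀ t ∈ K, dist (F (f t)) (F (g t)) ≤ L * dist (f t) (g t) := by
  obtain ⟨L, hL⟩ := hF.locallyLipschitzOn.exists_lipschitzOnWith_of_compact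
    ((hK.image_of_continuousOn hf).union (hK.image_of_continuousOn hg))
  exact ⟨L, fun t ht ↦ hL.dist_le_mul _ (.inl (mem_image_of_mem f ht))
    _ (.inr (mem_image_of_mem g ht))⟩

/-- The force exerted on a particle at `x` by its cyclic predecessor at `y` and its cyclic successor
at `z`, where `φ` is the derivative of the interaction potential. -/
def neighborForce {E : Type*} [AddCommGroup E] (φ : E → E) (y x z : E) : E :=
  φ (y - x) - φ (x - z)

section Trimer

variable {E : Type*} [NormedAddCommGroup E] [NormedSpace ℝ E] {b κ : E} {F : E → E}

lemma neighborForce_sub_neighborForce (hodd : Function.Odd F) (hF3b : F (-((3 : ℝ) • b)) = 0)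
    (x₁ x₂ x₃ : E) :
    neighborForce (fun x ↦ F (x - b) + κ) x₂ x₃ x₁ -
        neighborForce (fun x ↦ F (x - b) + κ) x₁ x₂ x₃ =
      (2 : ℝ) • (F (x₂ - x₃ - b) - F (-((3 : ℝ) • b))) -
        (F (x₃ - x₁ - b) - F (x₂ - x₁ + b)) := by
  have hreflect : F (x₁ - x₂ - b) = -F (x₂ - x₁ + b) := by
    rw [← hodd]
    congr 1
    abel
  simp only [neighborForce, hreflect, hF3b]
  module

lemma exists_norm_neighborForce_sub_le (hF : LocallyLipschitz F) (hodd : Function.Odd F)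
    (hF3b : F (-((3 : ℝ) • b)) = 0) {X : Type*} [TopologicalSpace X] {K : Set X}
    (hK : IsCompact K) {q₁ q₂ q₃ : X → E} (hq₁ : ContinuousOn q₁ K) (hq₂ : ContinuousOn q₂ K)
    (hq₃ : ContinuousOn q₃ K) :
    ∃ C : ℝ, ∀ t ∈ K,
      ‖neighborForce (fun x ↦ F (x - b) + κ) (q₂ t) (q₃ t) (q₁ t) -
          neighborForce (fun x ↦ F (x - b) + κ) (q₁ t) (q₂ t) (q₃ t)‖ ≤
        C * ‖q₃ t - q₂ t - (2 : ℝ) • b‖ := by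
  obtain ⟨L, hL⟩ := exists_dist_comp_le_mul_dist_of_isCompact hF hK
    (f := fun t ↦ q₂ t - q₃ t - b) (g := fun _ ↦ -((3 : ℝ) • b)) (by fun_prop) (by fun_prop)
  obtain ⟨M, hM⟩ := exists_dist_comp_le_mul_dist_of_isCompact hF hK
    (f := fun t ↦ q₃ t - q₁ t - b) (g := fun t ↦ q₂ t - q₁ t + b) (by fun_prop) (by fun_prop)
  refine ⟨2 * L + M, fun t ht ↦ ?_⟩
  have hdistL : dist (q₂ t - q₃ t - b) (-((3 : ℝ) • b)) = ‖q₃ t - q₂ t - (2 : ℝ) • b‖ := by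
    rw [dist_eq_norm, ← norm_neg]
    congr 1
    module
  have hdistM : dist (q₃ t - q₁ t - b) (q₂ t - q₁ t + b) = ‖q₃ t - q₂ t - (2 : ℝ) • b‖ := by
    rw [dist_eq_norm]
    congr 1
    module
  have hFL := hL t ht
  have hFM := hM t ht
  rw [hdistL, dist_eq_norm] at hFL
  rw [hdistM, dist_eq_norm] at hFM
  rw [neighborForce_sub_neighborForce hodd hF3b]
  calc ‖(2 : ℝ) • (F (q₂ t - q₃ t - b) - F (-((3 : ℝ) • b))) -
        (F (q₃ t - q₁ t - b) - F (q₂ t - q₁ t + b))‖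
      ≤ 2 * ‖F (q₂ t - q₃ t - b) - F (-((3 : ℝ) • b))‖ +
        ‖F (q₃ t - q₁ t - b) - F (q₂ t - q₁ t + b)‖ :=
        (norm_sub_le _ _).trans_eq (by rw [norm_smul, Real.norm_ofNat])
    _ ≤ 2 * (L * ‖q₃ t - q₂ t - (2 : ℝ) • b‖) + M * ‖q₃ t - q₂ t - (2 : ℝ) • b‖ := by gcongr
    _ = (2 * L + M) * ‖q₃ t - q₂ t - (2 : ℝ) • b‖ := by ring

theorem trimer_invariant_plane_general [CompleteSpace E] {θ : ℝ} (hF : LocallyLipschitz F)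
    (hodd : Function.Odd F) (hF3b : F (-((3 : ℝ) • b)) = 0)
    {φ : E → E} (hφ : φ = fun x ↦ F (x - b) + κ) {q₁ q₂ q₃ p₂ p₃ : ℝ → E}
    (hcq₁ : ContinuousOn q₁ (Icc 0 θ)) (hcq₂ : ContinuousOn q₂ (Icc 0 θ))
    (hcq₃ : ContinuousOn q₃ (Icc 0 θ))
    (hq₂ : ∀ t ∈ Icc 0 θ, q₂ t = q₂ 0 + ∫ s in 0..t, p₂ s)
    (hq₃ : ∀ t ∈ Icc 0 θ, q₃ t = q₃ 0 + ∫ s in 0..t, p₃ s)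
    (hp₂ : ∀ t ∈ Icc 0 θ, p₂ t = p₂ 0 + ∫ s in 0..t, neighborForce φ (q₁ s) (q₂ s) (q₃ s))
    (hp₃ : ∀ t ∈ Icc 0 θ, p₃ t = p₃ 0 + ∫ s in 0..t, neighborForce φ (q₂ s) (q₃ s) (q₁ s))
    (hinitq : q₃ 0 - q₂ 0 = (2 : ℝ) • b) (hinitp : p₃ 0 = p₂ 0) :
    ∀ t ∈ Icc 0 θ, q₃ t - q₂ t = (2 : ℝ) • b ∧ p₃ t = p₂ t := by
  subst hφ
  have hFc : Continuous F := hF.continuous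
  have hp₂' := hasDerivWithinAt_Icc_of_eq_add_integral
    (by unfold neighborForce; fun_prop) hp₂
  have hp₃' := hasDerivWithinAt_Icc_of_eq_add_integral
    (by unfold neighborForce; fun_prop) hp₃
  have hq₂' := hasDerivWithinAt_Icc_of_eq_add_integral
    (fun t ht ↦ (hp₂' t ht).continuousWithinAt) hq₂
  have hq₃' := hasDerivWithinAt_Icc_of_eq_add_integral
    (fun t ht ↦ (hp₃' t ht).continuousWithinAt) hq₃
  obtain ⟨C, hC⟩ := exists_norm_neighborForce_sub_le (κ := κ) hF hodd hF3b isCompact_Icc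
    hcq₁ hcq₂ hcq₃
  have hdev := eq_zero_of_norm_second_deriv_le
    (fun t ht ↦ ((hq₃' t ht).fun_sub (hq₂' t ht)).sub_const ((2 : ℝ) • b))
    (fun t ht ↦ (hp₃' t ht).fun_sub (hp₂' t ht))
    (sub_eq_zero.2 hinitq) (sub_eq_zero.2 hinitp) hC
  exact fun t ht ↦ (hdev t ht).imp sub_eq_zero.1 sub_eq_zero.1

end Trimer

/-- Low-dimensional invariant plane for the single forced periodic trimer.
With `φ(t) = F(t−b) + κ`, `F` odd and `F(−3b) = 0`, the plane
`Π_b : {p₃ − p₂ = 0, q₃ − q₂ = 2b}` is invariant for the controlled trimer. -/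
theorem trimer_invariant_plane (b κ θ : ℝ) (hθ : 0 < θ)
    (F : ℝ → ℝ) (hF : ContDiff ℝ 1 F) (hodd : ∀ t : ℝ, F (-t) = - F t)
    (hF3b : F (-(3 * b)) = 0)
    (φ : ℝ → ℝ) (hφ : φ = fun t => F (t - b) + κ)
    (u : ℝ → ℝ) (hu : Measurable u)
    (hub : ∃ C : ℝ, ∀ᵐ t : ℝ ∂volume, t ∈ Set.Icc (0:ℝ) θ → |u t| ≤ C)
    (q₁ q₂ q₃ p₁ p₂ p₃ : ℝ → ℝ)
    (hcq : ContinuousOn q₁ (Set.Icc 0 θ) ∧ ContinuousOn q₂ (Set.Icc 0 θ) ∧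
      ContinuousOn q₃ (Set.Icc 0 θ))
    (hcp : ContinuousOn p₁ (Set.Icc 0 θ) ∧ ContinuousOn p₂ (Set.Icc 0 θ) ∧
      ContinuousOn p₃ (Set.Icc 0 θ))
    (hq₁ : ∀ t ∈ Set.Icc (0:ℝ) θ, q₁ t = q₁ 0 + ∫ s in (0:ℝ)..t, p₁ s)
    (hq₂ : ∀ t ∈ Set.Icc (0:ℝ) θ, q₂ t = q₂ 0 + ∫ s in (0:ℝ)..t, p₂ s)
    (hq₃ : ∀ t ∈ Set.Icc (0:ℝ) θ, q₃ t = q₃ 0 + ∫ s in (0:ℝ)..t, p₃ s)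
    (hp₁ : ∀ t ∈ Set.Icc (0:ℝ) θ, p₁ t = p₁ 0 +
      ∫ s in (0:ℝ)..t, (φ (q₃ s - q₁ s) - φ (q₁ s - q₂ s) + u s))
    (hp₂ : ∀ t ∈ Set.Icc (0:ℝ) θ, p₂ t = p₂ 0 +
      ∫ s in (0:ℝ)..t, (φ (q₁ s - q₂ s) - φ (q₂ s - q₃ s)))
    (hp₃ : ∀ t ∈ Set.Icc (0:ℝ) θ, p₃ t = p₃ 0 +
      ∫ s in (0:ℝ)..t, (φ (q₂ s - q₃ s) - φ (q₃ s - q₁ s)))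
    (hinitq : q₃ 0 - q₂ 0 = 2 * b) (hinitp : p₃ 0 = p₂ 0) :
    ∀ t ∈ Set.Icc (0:ℝ) θ, q₃ t - q₂ t = 2 * b ∧ p₃ t = p₂ t := by
  exact trimer_invariant_plane_general hF.locallyLipschitz hodd hF3b hφ hcq.1 hcq.2.1 hcq.2.2
    hq₂ hq₃ hp₂ hp₃ hinitq hinitp
end
end

section
/- Compactness of energy sublevels on fixed-momentum–fixed-barycenter planes: Assume Φ : ℝ → ℝ is continuous, bounded below, and Φ(y) → +∞ as y → +∞. Then for every c ∈ ℝ and Q ∈ ℝ, the set { (q,p) ∈ ℝⁿ × ℝⁿ : H(q,p) ≤ c, Σ_{i=1}^n p_i = 0, Σ_{i=1}^n q_i = Q } is compact. -/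
/-!
Since `Φ` is bounded below, an upper bound on the energy bounds every kinetic term and every
`Φ (q_j - q_{j+1})`; as `Φ → +∞` at `+∞`, this bounds the steps `q_j - q_{j+1}` from above. The
energy gives no direct lower bound on the steps, since `Φ` may stay bounded at `-∞`; the cycle
supplies it: `i` is reached from `j` by at most `n` forward steps, so `q_j - q_i` is bounded above
for all `i` and `j`, hence on both sides by exchanging them, and all `q_j` lie near the barycenter
`Q / n`.
-/

open scoped BigOperators
open Filter

noncomputable section

/-- The Hamiltonian of the periodic multiparticle system:
`H(q,p) = ½ Σ p_k² + Σ Φ(q_j − q_{j+1})` with cyclic indexing. -/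
def Ham (n : ℕ) [NeZero n] (Φ : ℝ → ℝ) (x : State n) : ℝ :=
  (1 / 2) * ∑ k, (x.2 k) ^ 2 + ∑ j, Φ (x.1 j - x.1 (j + 1))

lemma sub_add_nsmul_le_nsmul {ι G : Type*} [AddMonoid ι] [AddCommGroup G] [PartialOrder G]
    [IsOrderedAddMonoid G] {q : ι → G} {s : ι} {B : G} (h : ∀ i, q i - q (i + s) ≤ B)
    (i : ι) (k : ℕ) : q i - q (i + k • s) ≤ k • B := by
  induction k with
  | zero => simp
  | succ k ih =>
    calc q i - q (i + (k + 1) • s)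
        = (q i - q (i + k • s)) + (q (i + k • s) - q (i + k • s + s)) := by
          rw [succ_nsmul, ← add_assoc, sub_add_sub_cancel]
      _ ≤ k • B + B := add_le_add ih (h _)
      _ = (k + 1) • B := (succ_nsmul B k).symm

section CyclicSteps

variable {G : Type*} [AddCommGroup G] [LinearOrder G] [IsOrderedAddMonoid G]
  {n : ℕ} [NeZero n] {q : Fin n → G} {B : G}

lemma nonneg_of_cyclic_step_le (h : ∀ j, q j - q (j + 1) ≤ B) : 0 ≤ B := by
  have hcycle : n • (1 : Fin n) = 0 := by simpa using card_nsmul_eq_zero' (x := (1 : Fin n))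
  have hn : 0 ≤ n • B := by simpa [hcycle] using sub_add_nsmul_le_nsmul h 0 n
  exact (nsmul_nonneg_iff (NeZero.ne n)).1 hn

open Fin.CommRing in
lemma abs_sub_le_nsmul_of_cyclic_step_le (h : ∀ j, q j - q (j + 1) ≤ B) (i j : Fin n) :
    |q i - q j| ≤ n • B := by
  have forward (i j : Fin n) : q i - q j ≤ n • B :=
    calc q i - q j ≤ (j - i).val • B := by
          simpa using sub_add_nsmul_le_nsmul h i (j - i).val
      _ ≤ n • B := nsmul_le_nsmul_left (nonneg_of_cyclic_step_le h) (j - i).isLt.le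
  exact abs_sub_le_iff.2 ⟨forward i j, forward j i⟩

end CyclicSteps

lemma abs_sub_expect_le {ι G : Type*} [Fintype ι] [Nonempty ι] [AddCommGroup G] [LinearOrder G]
    [IsOrderedAddMonoid G] [Module ℚ≥0 G] [PosSMulMono ℚ≥0 G] {f : ι → G} {a D : G}
    (h : ∀ i, |a - f i| ≤ D) : |a - 𝔼 i, f i| ≤ D :=
  calc |a - 𝔼 i, f i| = |𝔼 i, (a - f i)| := by
        rw [Finset.expect_sub_distrib, Fintype.expect_const]
    _ ≤ 𝔼 i, |a - f i| := Finset.abs_expect_le _ _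
    _ ≤ D := Finset.expect_le Finset.univ_nonempty fun i _ => h i

lemma sub_le_sum_sub_card_nsmul {ι G : Type*} [Fintype ι] [AddCommGroup G] [PartialOrder G]
    [IsOrderedAddMonoid G] {f : ι → G} {m : G} (h : ∀ i, m ≤ f i) (j : ι) :
    f j - m ≤ ∑ i, f i - Fintype.card ι • m := by
  simpa using Finset.single_le_sum (f := fun i => f i - m)
    (fun i _ => sub_nonneg.2 (h i)) (Finset.mem_univ j)

section Energy

variable {n : ℕ} [NeZero n] {Φ : ℝ → ℝ}

lemma sq_momentum_le_two_mul_Ham_sub {m : ℝ} (hm : ∀ y, m ≤ Φ y) (x : State n) (k : Fin n) :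
    x.2 k ^ 2 ≤ 2 * (Ham n Φ x - n * m) := by
  have hkin : x.2 k ^ 2 ≤ ∑ k, x.2 k ^ 2 :=
    Finset.single_le_sum (f := fun k => x.2 k ^ 2) (fun _ _ => sq_nonneg _) (Finset.mem_univ k)
  have hpot : n * m ≤ ∑ j, Φ (x.1 j - x.1 (j + 1)) := by
    simpa using Finset.card_nsmul_le_sum Finset.univ (fun j => Φ (x.1 j - x.1 (j + 1))) m
      fun _ _ => hm _
  rw [Ham]
  linarith

lemma potential_sub_le_Ham_sub {m : ℝ} (hm : ∀ y, m ≤ Φ y) (x : State n) (j : Fin n) :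
    Φ (x.1 j - x.1 (j + 1)) - m ≤ Ham n Φ x - n * m := by
  have hkin : 0 ≤ ∑ k, x.2 k ^ 2 := Finset.sum_nonneg fun _ _ => sq_nonneg _
  have hpot := sub_le_sum_sub_card_nsmul (f := fun j => Φ (x.1 j - x.1 (j + 1))) (fun _ => hm _) j
  rw [Fintype.card_fin, nsmul_eq_mul] at hpot
  rw [Ham]
  linarith

lemma exists_cyclic_step_le_of_Ham_le (hbdd : BddBelow (Set.range Φ))
    (htend : Tendsto Φ atTop atTop) (c : ℝ) :
    ∃ B, ∀ x : State n, Ham n Φ x ≤ c → ∀ j, x.1 j - x.1 (j + 1) ≤ B := by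
  obtain ⟨m, hm⟩ := hbdd
  obtain ⟨B, hB⟩ := eventually_atTop.1 (htend.eventually_gt_atTop (c - n * m + m))
  refine ⟨B, fun x hx j => le_of_not_ge fun hj => ?_⟩
  have hpot := potential_sub_le_Ham_sub (Set.forall_mem_range.1 hm) x j
  linarith [hB _ hj]

lemma isBounded_Ham_sublevel (hbdd : BddBelow (Set.range Φ)) (htend : Tendsto Φ atTop atTop)
    (c Q : ℝ) : Bornology.IsBounded {x : State n | Ham n Φ x ≤ c ∧ ∑ i, x.1 i = Q} := by
  obtain ⟨B, hB⟩ := exists_cyclic_step_le_of_Ham_le (n := n) hbdd htend c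
  obtain ⟨m, hm⟩ := hbdd
  have hq (x : State n) (hx : Ham n Φ x ≤ c ∧ ∑ i, x.1 i = Q) (j : Fin n) :
      |x.1 j - Q / n| ≤ n • B := by
    simpa only [Fintype.expect_eq_sum_div_card, hx.2, Fintype.card_fin] using
      abs_sub_expect_le (abs_sub_le_nsmul_of_cyclic_step_le (hB x hx.1) j)
  have hp (x : State n) (hx : Ham n Φ x ≤ c) (k : Fin n) : |x.2 k| ≤ √(2 * (c - n * m)) :=
    Real.abs_le_sqrt <| (sq_momentum_le_two_mul_Ham_sub (Set.forall_mem_range.1 hm) x k).trans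
      (by gcongr)
  have hbox : Bornology.IsBounded
      ((Set.univ.pi fun _ : Fin n => Metric.closedBall (Q / n) (n • B)) ×ˢ
        Set.univ.pi fun _ : Fin n => Metric.closedBall (0 : ℝ) √(2 * (c - n * m))) :=
    (Bornology.IsBounded.pi fun _ => Metric.isBounded_closedBall).prod
      (Bornology.IsBounded.pi fun _ => Metric.isBounded_closedBall)
  exact hbox.subset fun x hx => ⟨fun j _ => hq x hx j, fun k _ => by simpa using hp x hx.1 k⟩

lemma lowerSemicontinuous_Ham (hΦ : LowerSemicontinuous Φ) :
    LowerSemicontinuous (Ham n Φ) := by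
  have hkin : Continuous fun x : State n => (1 / 2) * ∑ k, x.2 k ^ 2 := by fun_prop
  have hpot : LowerSemicontinuous fun x : State n => ∑ j, Φ (x.1 j - x.1 (j + 1)) :=
    lowerSemicontinuous_sum fun j _ => LowerSemicontinuous.comp hΦ (by fun_prop)
  exact hkin.lowerSemicontinuous.add hpot

end Energy

theorem energy_sublevel_compact_general (n : ℕ) [NeZero n] (Φ : ℝ → ℝ)
    (hΦ : LowerSemicontinuous Φ) (hbdd : BddBelow (Set.range Φ))
    (htend : Tendsto Φ atTop atTop) (c Q : ℝ) :
    IsCompact {x : State n | Ham n Φ x ≤ c ∧ ∑ i, x.1 i = Q} :=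
  have hH : IsClosed {x : State n | Ham n Φ x ≤ c} :=
    (lowerSemicontinuous_Ham hΦ).isClosed_preimage c
  have hQ : IsClosed {x : State n | ∑ i, x.1 i = Q} :=
    isClosed_eq (by fun_prop) continuous_const
  Metric.isCompact_of_isClosed_isBounded (hH.inter hQ) (isBounded_Ham_sublevel hbdd htend c Q)

/-- Compactness of energy sublevels on fixed-momentum–fixed-barycenter
planes `Π_Q ∩ {H ≤ c}`. -/
theorem energy_sublevel_compact (n : ℕ) [NeZero n] (hn : 3 ≤ n) (Φ : ℝ → ℝ)
    (hcont : Continuous Φ) (hbdd : BddBelow (Set.range Φ))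
    (htend : Tendsto Φ atTop atTop) (c Q : ℝ) :
    IsCompact {x : State n | Ham n Φ x ≤ c ∧ (∑ i, x.2 i) = 0 ∧ (∑ i, x.1 i) = Q} := by
  have hP : IsClosed {x : State n | ∑ i, x.2 i = 0} := isClosed_eq (by fun_prop) continuous_const
  simpa only [Set.ofPred_and, Set.inter_left_comm] using
    (energy_sublevel_compact_general n Φ hcont.lowerSemicontinuous hbdd htend c Q).inter_left hP
end
end

section
/- Coordinate bounds from bounded cyclic differences and fixed sum: Let n ≥ 2, b ≥ 0, Q ∈ ℝ, and let q ∈ ℝⁿ satisfy q_j − q_{j+1} ≤ b for all j = 1, …, n (cyclic indexing, q_{n+1} = q₁) and Σ_{i=1}^n q_i = Q. Then for every j = 1, …, n: Q/n − b(n+1)/2 ≤ q_j ≤ Q/n + b(n−1)/2. -/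
open scoped BigOperators

/-!
Chaining the cyclic inequality gives `q j - q (j + k) ≤ k * b`. As `k` runs over `0, …, n - 1`, the
index `j + k` takes each value once, so summing over `k` yields `n * q j - Q ≤ (n choose 2) * b`,
which is the upper bound. The hypothesis is preserved when `q` is replaced by `i ↦ -q (-i)`, and
this turns the upper bound into a lower bound with the same constant `b * (n - 1) / 2`.
-/

section OrderedGroup

variable {α : Type*} [AddCommGroup α] [PartialOrder α] [IsOrderedAddMonoid α] {b : α}

lemma sub_apply_add_nsmul_le {G : Type*} [AddMonoid G] {f : G → α} {g : G}
    (hf : ∀ x, f x - f (x + g) ≤ b) (x : G) (m : ℕ) : f x - f (x + m • g) ≤ m • b := by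
  induction m with
  | zero => simp
  | succ m ih =>
    calc f x - f (x + (m + 1) • g)
        = (f x - f (x + m • g)) + (f (x + m • g) - f (x + m • g + g)) := by
          rw [succ_nsmul, add_assoc, sub_add_sub_cancel]
      _ ≤ m • b + b := add_le_add ih (hf _)
      _ = (m + 1) • b := (succ_nsmul b m).symm

lemma card_nsmul_sub_sum_le {G : Type*} [AddGroup G] [Fintype G] {f c : G → α} {x : G}
    (h : ∀ k, f x - f (x + k) ≤ c k) :
    Fintype.card G • f x - ∑ y, f y ≤ ∑ k, c k := by
  calc Fintype.card G • f x - ∑ y, f y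
      = ∑ k, (f x - f (x + k)) := by
        rw [Finset.sum_sub_distrib, ← Equiv.sum_comp (Equiv.addLeft x) f]
        simp
    _ ≤ ∑ k, c k := Finset.sum_le_sum fun k _ => h k

lemma nsmul_sub_sum_le_choose_two_nsmul {n : ℕ} [NeZero n] {q : Fin n → α}
    (hdiff : ∀ j, q j - q (j + 1) ≤ b) (j : Fin n) :
    n • q j - ∑ i, q i ≤ n.choose 2 • b := by
  have hshift (k : Fin n) : q j - q (j + k) ≤ (k : ℕ) • b := by
    have hk : (k : ℕ) • (1 : Fin n) = k := by
      open Fin.CommRing in rw [nsmul_one, Fin.cast_val_eq_self]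
    simpa only [hk] using sub_apply_add_nsmul_le hdiff j k
  have hgauss : ∑ k : Fin n, (k : ℕ) • b = n.choose 2 • b := by
    rw [Fin.sum_univ_eq_sum_range (· • b), Finset.sum_nsmul_assoc, Finset.sum_range_id,
      Nat.choose_two_right]
  simpa only [Fintype.card_fin, hgauss] using card_nsmul_sub_sum_le hshift

end OrderedGroup

section OrderedField

variable {K : Type*} [Field K] [LinearOrder K] [IsStrictOrderedRing K]
  {n : ℕ} [NeZero n] {b : K} {q : Fin n → K}

lemma sub_average_le (hdiff : ∀ j, q j - q (j + 1) ≤ b) (j : Fin n) :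
    q j - (∑ i, q i) / n ≤ b * (n - 1) / 2 := by
  have hn : (0 : K) < n := Nat.cast_pos.2 (NeZero.pos n)
  refine le_of_mul_le_mul_left ?_ hn
  calc n * (q j - (∑ i, q i) / n) = n • q j - ∑ i, q i := by
        rw [mul_sub, mul_div_cancel₀ _ hn.ne', nsmul_eq_mul]
    _ ≤ n.choose 2 • b := nsmul_sub_sum_le_choose_two_nsmul hdiff j
    _ = n * (b * (n - 1) / 2) := by
        rw [nsmul_eq_mul, Nat.cast_choose_two]
        ring

theorem coordinate_bounds_general (hdiff : ∀ j, q j - q (j + 1) ≤ b) (j : Fin n) :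
    |q j - (∑ i, q i) / n| ≤ b * (n - 1) / 2 := by
  have hreflect (i : Fin n) : -q (-i) - -q (-(i + 1)) ≤ b := by
    simpa [neg_add_rev, add_comm, sub_eq_add_neg] using hdiff (-(i + 1))
  have hsum : ∑ i, -q (-i) = -∑ i, q i := by
    rw [Finset.sum_neg_distrib]
    exact congrArg Neg.neg (Equiv.sum_comp (Equiv.neg (Fin n)) q)
  have hlower := sub_average_le hreflect (-j)
  rw [hsum, neg_neg] at hlower
  refine abs_le'.2 ⟨sub_average_le hdiff j, ?_⟩
  linear_combination hlower

end OrderedField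

/-- Coordinate bounds from bounded cyclic differences and fixed sum:
if `q_j − q_{j+1} ≤ b` for all `j` (cyclic indexing) and `Σ q_i = Q`, then
`Q/n − b(n+1)/2 ≤ q_j ≤ Q/n + b(n−1)/2` for every `j`. -/
theorem coordinate_bounds (n : ℕ) [NeZero n] (hn : 2 ≤ n) (b Q : ℝ) (hb : 0 ≤ b)
    (q : Fin n → ℝ) (hdiff : ∀ j : Fin n, q j - q (j + 1) ≤ b)
    (hsum : (∑ i, q i) = Q) :
    ∀ j : Fin n,
      Q / n - b * ((n : ℝ) + 1) / 2 ≤ q j ∧ q j ≤ Q / n + b * ((n : ℝ) - 1) / 2 := by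
  intro j
  obtain ⟨hlower, hupper⟩ := abs_le.1 (hsum ▸ coordinate_bounds_general hdiff j)
  constructor <;> linarith
end
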